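/- Let n1 ≥ n2 ≥ 1, let L0 ∈ ℝ^{n1×n2} have rank r ≤ n2/10 with compact SVD L0 = UΣVᵀ (U, V with orthonormal columns), let S0 vanish off Ω and be nonzero on Ω, let Z0 ∈ ℝ^{n1×n2} be arbitrary, and set D = L0 + S0 + Z0, λ = 1/√n1, μ = √(n2/2). Suppose there exist W, F, H ∈ ℝ^{n1×n2} with UVᵀ + W = λ(sign(S0) + F + P_Ω H), W ∈ T⊥, ‖W‖ ≤ 1/2, P_Ω F = 0, ‖F‖_∞ ≤ 1/2, and ‖P_Ω H‖_F ≤ 1/(260√2). Then every minimizer (L̂, Ŝ) of the √PCP problem with these λ, μ satisfies, with δ_L = L̂ − L0 and δ_S = Ŝ − S0: (1/(520·√(n1·n2)))·(‖δ_L‖_F + ‖δ_S‖_F) + 2‖Z0‖_F ≥ 0.15·‖δ_L + δ_S‖_F. -/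

import Mathlib

open Matrix
open scoped BigOperators

/-- Frobenius norm of a real matrix. -/
noncomputable def frob {n1 n2 : ℕ} (A : Matrix (Fin n1) (Fin n2) ℝ) : ℝ :=
  Real.sqrt (∑ i, ∑ j, A i j ^ 2)

/-- Entrywise ℓ¹ norm. -/
noncomputable def l1norm {n1 n2 : ℕ} (A : Matrix (Fin n1) (Fin n2) ℝ) : ℝ :=
  ∑ i, ∑ j, |A i j|

/-- Trace inner product ⟨A,B⟩ = trace(AᵀB). -/
noncomputable def minner {n1 n2 : ℕ} (A B : Matrix (Fin n1) (Fin n2) ℝ) : ℝ :=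
  ∑ i, ∑ j, A i j * B i j

/-- Spectral norm (largest singular value), as the ℓ²→ℓ² operator norm. -/
noncomputable def spec {n1 n2 : ℕ} (A : Matrix (Fin n1) (Fin n2) ℝ) : ℝ :=
  sSup {c : ℝ | ∃ x : Fin n2 → ℝ, (∑ j, x j ^ 2) ≤ 1 ∧
    c = Real.sqrt (∑ i, (∑ j, A i j * x j) ^ 2)}

/-- Nuclear norm (sum of singular values), via duality with the spectral norm. -/
noncomputable def nuc {n1 n2 : ℕ} (A : Matrix (Fin n1) (Fin n2) ℝ) : ℝ :=
  sSup {c : ℝ | ∃ B : Matrix (Fin n1) (Fin n2) ℝ, spec B ≤ 1 ∧ c = minner A B}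

/-- P_Ω: the matrix agreeing with `M` on `Ω` and zero off `Ω`. -/
noncomputable def projS {n1 n2 : ℕ} (Ω : Finset (Fin n1 × Fin n2))
    (M : Matrix (Fin n1) (Fin n2) ℝ) : Matrix (Fin n1) (Fin n2) ℝ :=
  Matrix.of fun i j => if (i, j) ∈ Ω then M i j else 0

/-- Entrywise sign matrix. -/
noncomputable def signM {n1 n2 : ℕ} (A : Matrix (Fin n1) (Fin n2) ℝ) :
    Matrix (Fin n1) (Fin n2) ℝ :=
  Matrix.of fun i j => Real.sign (A i j)

/-- The tangent space T = {UQᵀ + RVᵀ}. -/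
def memT {n1 n2 r : ℕ} (U : Matrix (Fin n1) (Fin r) ℝ) (V : Matrix (Fin n2) (Fin r) ℝ)
    (M : Matrix (Fin n1) (Fin n2) ℝ) : Prop :=
  ∃ (Q : Matrix (Fin n2) (Fin r) ℝ) (R : Matrix (Fin n1) (Fin r) ℝ), M = U * Qᵀ + R * Vᵀ

/-- Membership in T⊥, the orthogonal complement of the tangent space. -/
def memTperp {n1 n2 r : ℕ} (U : Matrix (Fin n1) (Fin r) ℝ) (V : Matrix (Fin n2) (Fin r) ℝ)
    (W : Matrix (Fin n1) (Fin n2) ℝ) : Prop :=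
  ∀ M, memT U V M → minner W M = 0

/-- (L̂, Ŝ) is a global minimizer of the √PCP objective
`‖L‖_* + λ‖S‖₁ + μ‖L + S − D‖_F`. -/
def IsRootPCPMin {n1 n2 : ℕ} (D : Matrix (Fin n1) (Fin n2) ℝ) (lam mu : ℝ)
    (Lh Sh : Matrix (Fin n1) (Fin n2) ℝ) : Prop :=
  ∀ L S : Matrix (Fin n1) (Fin n2) ℝ,
    nuc Lh + lam * l1norm Sh + mu * frob (Lh + Sh - D) ≤
      nuc L + lam * l1norm S + mu * frob (L + S - D)

/-- (L̂, Ŝ) is a minimizer of StablePCP_c(δ):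
minimize `‖L‖_* + λ‖S‖₁` subject to `‖L + S − D‖_F ≤ δ`. -/
def IsStablePCPMin {n1 n2 : ℕ} (D : Matrix (Fin n1) (Fin n2) ℝ) (lam δ : ℝ)
    (Lh Sh : Matrix (Fin n1) (Fin n2) ℝ) : Prop :=
  frob (Lh + Sh - D) ≤ δ ∧
    ∀ L S : Matrix (Fin n1) (Fin n2) ℝ, frob (L + S - D) ≤ δ →
      nuc Lh + lam * l1norm Sh ≤ nuc L + lam * l1norm S

/-- Frobenius distance between pairs: ‖(L,S) − (L',S')‖_F. -/
noncomputable def pairDist {n1 n2 : ℕ} (L S L' S' : Matrix (Fin n1) (Fin n2) ℝ) : ℝ :=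
  Real.sqrt (frob (L - L') ^ 2 + frob (S - S') ^ 2)

/-- Sample space of the random sparsity model: a uniformly random support of
cardinality m together with iid uniform random signs. -/
abbrev SampleSpace (n1 n2 m : ℕ) : Type :=
  {Ω : Finset (Fin n1 × Fin n2) // Ω.card = m} × ((Fin n1 × Fin n2) → Bool)

/-- The sparse matrix S0 built from fixed magnitudes `a` and a random sample:
S0 vanishes off Ω and equals ±a on Ω according to the random signs. -/
noncomputable def sparseOf {n1 n2 m : ℕ} (a : Fin n1 × Fin n2 → ℝ) (ω : SampleSpace n1 n2 m) :
    Matrix (Fin n1) (Fin n2) ℝ :=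
  Matrix.of fun i j =>
    if (i, j) ∈ ω.1.1 then (if ω.2 (i, j) then a (i, j) else -a (i, j)) else 0

open Classical in
/-- Uniform probability of an event on a finite sample space. -/
noncomputable def unifProb {α : Type*} [Fintype α] (E : α → Prop) : ℝ :=
  ((Finset.univ.filter fun a => E a).card : ℝ) / (Fintype.card α : ℝ)

/-!
Put `Y = U Vᵀ + W`. The certificate makes `Y` a subgradient of the nuclear norm at `L0` and, up to
the error `λ P_Ω H`, `λ` times a subgradient of the `ℓ¹` norm at `S0`. Comparing a minimizer with
`(L0, S0)` therefore changes the first two terms of the objective by at least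
`⟨Y, δ_L + δ_S⟩ - λ ⟨P_Ω H, δ_S⟩`, and Cauchy–Schwarz gives
`(μ - ‖Y‖_F) ‖δ_L + δ_S‖_F ≤ λ ‖P_Ω H‖_F ‖δ_S‖_F + 2 μ ‖Z0‖_F`.
Since `W` is orthogonal to `U Vᵀ`, `‖U Vᵀ‖_F² = r ≤ n2 / 10` and `‖W‖ ≤ 1 / 2`, one has
`‖Y‖_F ≤ 0.84 μ`, which leaves a definite multiple of `‖δ_L + δ_S‖_F` on the left.

The spectral norm bound `‖A‖ ≤ c` is used only through the positive semidefiniteness of `c² - Aᴴ A`.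
-/

section L2OpNorm

open scoped ComplexOrder Matrix.Norms.L2Operator

variable {𝕜 m n k : Type*} [RCLike 𝕜] [Fintype m] [DecidableEq k]

theorem conjTranspose_mul_self_mul_conjTranspose_add [Fintype k] {U : Matrix m k 𝕜}
    (V : Matrix n k 𝕜) {W : Matrix m n 𝕜} (hU : Uᴴ * U = 1) (hUW : Uᴴ * W = 0) :
    (U * Vᴴ + W)ᴴ * (U * Vᴴ + W) = V * Vᴴ + Wᴴ * W := by
  have hWU : Wᴴ * U = 0 := by simpa using congrArg conjTranspose hUW
  simp [Matrix.mul_add, Matrix.add_mul, Matrix.mul_assoc, ← Matrix.mul_assoc Uᴴ,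
    ← Matrix.mul_assoc Wᴴ U, hU, hUW, hWU]

variable [Fintype n] [DecidableEq n]

theorem star_dotProduct_sub_conjTranspose_mul_self_mulVec (A : Matrix m n 𝕜) (c : ℝ)
    (x : n → 𝕜) :
    star x ⬝ᵥ ((c ^ 2 • 1 - Aᴴ * A) *ᵥ x) =
      ((c ^ 2 * ‖WithLp.toLp 2 x‖ ^ 2 - ‖WithLp.toLp 2 (A *ᵥ x)‖ ^ 2 : ℝ) : 𝕜) := by
  rw [sub_mulVec, dotProduct_sub, ← mulVec_mulVec, dotProduct_mulVec _ Aᴴ, ← star_mulVec,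
    smul_mulVec, one_mulVec, dotProduct_smul, EuclideanSpace.norm_sq_eq, EuclideanSpace.norm_sq_eq]
  simp [dotProduct, RCLike.conj_mul, RCLike.real_smul_eq_coe_mul]

theorem l2_opNorm_le_iff_posSemidef {A : Matrix m n 𝕜} {c : ℝ} (hc : 0 ≤ c) :
    ‖A‖ ≤ c ↔ (c ^ 2 • 1 - Aᴴ * A : Matrix n n 𝕜).PosSemidef := by
  have hherm : (c ^ 2 • 1 - Aᴴ * A : Matrix n n 𝕜).IsHermitian := by
    simp [IsHermitian]
  rw [l2_opNorm_def, ContinuousLinearMap.opNorm_le_iff hc, posSemidef_iff_dotProduct_mulVec,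
    and_iff_right hherm, (WithLp.equiv 2 (n → 𝕜)).symm.surjective.forall]
  refine forall_congr' fun x => ?_
  rw [star_dotProduct_sub_conjTranspose_mul_self_mulVec, RCLike.ofReal_nonneg, sub_nonneg,
    ← mul_pow, sq_le_sq₀ (norm_nonneg _) (by positivity)]
  rfl

theorem sum_sum_norm_sq_le_of_l2_opNorm_le {A : Matrix m n 𝕜} {c : ℝ} (hA : ‖A‖ ≤ c) :
    ∑ i, ∑ j, ‖A i j‖ ^ 2 ≤ Fintype.card n * c ^ 2 := by
  have htrace : (c ^ 2 • 1 - Aᴴ * A).trace =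
      ((Fintype.card n * c ^ 2 - ∑ i, ∑ j, ‖A i j‖ ^ 2 : ℝ) : 𝕜) := by
    rw [Finset.sum_comm]
    simp [trace, mul_apply, RCLike.conj_mul, RCLike.real_smul_eq_coe_mul]
  have hpsd := (l2_opNorm_le_iff_posSemidef ((norm_nonneg A).trans hA)).mp hA
  rw [← sub_nonneg, ← RCLike.ofReal_nonneg (K := 𝕜), ← htrace]
  exact hpsd.trace_nonneg

theorem re_conjTranspose_mul_mul_apply_self_le_one [Finite k] {U : Matrix m k 𝕜} {B : Matrix m n 𝕜}
    {V : Matrix n k 𝕜} (hU : Uᴴ * U = 1) (hV : Vᴴ * V = 1) (hB : ‖B‖ ≤ 1) (a : k) :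
    RCLike.re ((Uᴴ * B * V) a a) ≤ 1 := by
  have hpsd : (Vᴴ * (1 - Bᴴ * B) * V + (U - B * V)ᴴ * (U - B * V)).PosSemidef := by
    refine .add (.conjTranspose_mul_mul_same ?_ V) (posSemidef_conjTranspose_mul_self _)
    simpa using (l2_opNorm_le_iff_posSemidef zero_le_one).mp hB
  have hsum : Vᴴ * (1 - Bᴴ * B) * V + (U - B * V)ᴴ * (U - B * V) =
      1 + 1 - Uᴴ * B * V - (Uᴴ * B * V)ᴴ := by
    simp only [conjTranspose_sub, conjTranspose_mul, conjTranspose_conjTranspose, hU, hV,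
      Matrix.mul_assoc, Matrix.mul_sub, Matrix.sub_mul, Matrix.one_mul]
    abel
  rw [hsum] at hpsd
  have hdiag := (RCLike.nonneg_iff.mp (hpsd.diag_nonneg (i := a))).1
  simp only [Matrix.sub_apply, Matrix.add_apply, one_apply_eq, conjTranspose_apply, map_sub,
    map_add, RCLike.one_re, RCLike.star_def, RCLike.conj_re] at hdiag
  linarith

theorem l2_opNorm_mul_conjTranspose_add_le_one [Fintype k] {U : Matrix m k 𝕜}
    {V : Matrix n k 𝕜} {W : Matrix m n 𝕜} (hU : Uᴴ * U = 1) (hV : Vᴴ * V = 1)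
    (hUW : Uᴴ * W = 0) (hWV : W * V = 0) (hW : ‖W‖ ≤ 1) : ‖U * Vᴴ + W‖ ≤ 1 := by
  rw [l2_opNorm_le_iff_posSemidef zero_le_one] at hW ⊢
  have hVW : Vᴴ * Wᴴ = 0 := by simpa using congrArg conjTranspose hWV
  have hgram : (1 : ℝ) ^ 2 • 1 - (U * Vᴴ + W)ᴴ * (U * Vᴴ + W) =
      (1 - V * Vᴴ)ᴴ * ((1 : ℝ) ^ 2 • 1 - Wᴴ * W) * (1 - V * Vᴴ) := by
    rw [conjTranspose_mul_self_mul_conjTranspose_add V hU hUW]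
    simp [Matrix.mul_sub, Matrix.sub_mul, Matrix.mul_assoc, ← Matrix.mul_assoc Vᴴ,
      ← Matrix.mul_assoc W V, hV, hWV, hVW, sub_add_eq_sub_sub]
  rw [hgram]
  exact hW.conjTranspose_mul_mul_same _

end L2OpNorm

section Norms

variable {n1 n2 : ℕ}

open scoped Matrix.Norms.Frobenius in
theorem frob_eq_frobenius_norm (A : Matrix (Fin n1) (Fin n2) ℝ) : frob A = ‖A‖ := by
  simp [frob, frobenius_norm_def, Real.sqrt_eq_rpow]

theorem frob_nonneg (A : Matrix (Fin n1) (Fin n2) ℝ) : 0 ≤ frob A :=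
  Real.sqrt_nonneg _

theorem frob_neg (A : Matrix (Fin n1) (Fin n2) ℝ) : frob (-A) = frob A := by
  simp [frob]

open scoped Matrix.Norms.Frobenius in
theorem frob_add_le (A B : Matrix (Fin n1) (Fin n2) ℝ) : frob (A + B) ≤ frob A + frob B := by
  simpa only [frob_eq_frobenius_norm] using norm_add_le A B

theorem frob_sub_le (A B : Matrix (Fin n1) (Fin n2) ℝ) : frob (A - B) ≤ frob A + frob B := by
  simpa only [sub_eq_add_neg, frob_neg] using frob_add_le A (-B)

theorem frob_sq_eq_sum (A : Matrix (Fin n1) (Fin n2) ℝ) : frob A ^ 2 = ∑ i, ∑ j, A i j ^ 2 :=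
  Real.sq_sqrt (by positivity)

theorem frob_sq_eq_trace (A : Matrix (Fin n1) (Fin n2) ℝ) : frob A ^ 2 = (Aᵀ * A).trace := by
  rw [frob_sq_eq_sum, Finset.sum_comm]
  simp [trace, mul_apply, sq]

theorem minner_eq_trace (A B : Matrix (Fin n1) (Fin n2) ℝ) : minner A B = (Aᵀ * B).trace := by
  rw [minner, Finset.sum_comm]
  simp [trace, mul_apply]

theorem minner_comm (A B : Matrix (Fin n1) (Fin n2) ℝ) : minner A B = minner B A := by
  simp [minner, mul_comm]

theorem minner_add_left (A B C : Matrix (Fin n1) (Fin n2) ℝ) :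
    minner (A + B) C = minner A C + minner B C := by
  simp [minner_eq_trace, Matrix.add_mul]

theorem minner_add_right (A B C : Matrix (Fin n1) (Fin n2) ℝ) :
    minner A (B + C) = minner A B + minner A C := by
  simp [minner_eq_trace, Matrix.mul_add]

theorem minner_sub_right (A B C : Matrix (Fin n1) (Fin n2) ℝ) :
    minner A (B - C) = minner A B - minner A C := by
  simp [minner_eq_trace, Matrix.mul_sub]

theorem minner_smul_left (c : ℝ) (A B : Matrix (Fin n1) (Fin n2) ℝ) :
    minner (c • A) B = c * minner A B := by
  simp [minner_eq_trace]

theorem abs_minner_le_frob_mul_frob (A B : Matrix (Fin n1) (Fin n2) ℝ) :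
    |minner A B| ≤ frob A * frob B := by
  simp only [minner, frob, ← Fintype.sum_prod_type']
  rw [← Real.sqrt_mul (by positivity)]
  exact Real.abs_le_sqrt (Finset.sum_mul_sq_le_sq_mul_sq _ _ _)

open scoped Matrix.Norms.L2Operator in
theorem spec_eq_l2_opNorm (A : Matrix (Fin n1) (Fin n2) ℝ) : spec A = ‖A‖ := by
  rw [l2_opNorm_def, ← ContinuousLinearMap.sSup_unitClosedBall_eq_norm, spec]
  congr 1
  ext c
  simp [(WithLp.equiv 2 (Fin n2 → ℝ)).symm.surjective.exists, EuclideanSpace.norm_eq,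
    Real.sqrt_le_left, mulVec, dotProduct, eq_comm]

theorem frob_sq_le_of_spec_le {A : Matrix (Fin n1) (Fin n2) ℝ} {c : ℝ} (hA : spec A ≤ c) :
    frob A ^ 2 ≤ n2 * c ^ 2 := by
  rw [spec_eq_l2_opNorm] at hA
  simpa [frob_sq_eq_sum] using sum_sum_norm_sq_le_of_l2_opNorm_le hA

theorem minner_le_nuc (A : Matrix (Fin n1) (Fin n2) ℝ) {B : Matrix (Fin n1) (Fin n2) ℝ}
    (hB : spec B ≤ 1) : minner A B ≤ nuc A := by
  refine le_csSup ⟨frob A * √n2, ?_⟩ ⟨B, hB, rfl⟩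
  rintro _ ⟨C, hC, rfl⟩
  have hCfrob : frob C ≤ √n2 := Real.le_sqrt_of_sq_le (by simpa using frob_sq_le_of_spec_le hC)
  calc minner A C ≤ frob A * frob C := (le_abs_self _).trans (abs_minner_le_frob_mul_frob A C)
    _ ≤ frob A * √n2 := mul_le_mul_of_nonneg_left hCfrob (frob_nonneg A)

end Norms

section Subgradient

variable {n1 n2 : ℕ}

/-- `G` is a subgradient of `f` at `A` with respect to the trace inner product. -/
def IsSubgradientAt (f : Matrix (Fin n1) (Fin n2) ℝ → ℝ) (A G : Matrix (Fin n1) (Fin n2) ℝ) :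
    Prop :=
  ∀ B, f A + minner G (B - A) ≤ f B

theorem isSubgradientAt_nuc {A Y : Matrix (Fin n1) (Fin n2) ℝ} (hY : spec Y ≤ 1)
    (hA : nuc A ≤ minner A Y) : IsSubgradientAt nuc A Y := by
  intro B
  have hB := minner_le_nuc B hY
  rw [minner_sub_right, minner_comm Y B, minner_comm Y A]
  linarith

theorem abs_add_sign_add_mul_sub_le {x t : ℝ} (ht : x ≠ 0 → t = 0) (ht1 : |t| ≤ 1) (y : ℝ) :
    |x| + (x.sign + t) * (y - x) ≤ |y| := by
  obtain ⟨habs, hmul⟩ : |x.sign + t| ≤ 1 ∧ (x.sign + t) * x = |x| := by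
    rcases lt_trichotomy x 0 with hx | rfl | hx
    · simp [ht hx.ne, Real.sign_of_neg hx, abs_of_neg hx]
    · simpa using ht1
    · simp [ht hx.ne', Real.sign_of_pos hx, abs_of_pos hx]
  calc |x| + (x.sign + t) * (y - x) = (x.sign + t) * y := by rw [mul_sub, hmul]; ring
    _ ≤ |x.sign + t| * |y| := by rw [← abs_mul]; exact le_abs_self _
    _ ≤ |y| := mul_le_of_le_one_left (abs_nonneg y) habs

theorem isSubgradientAt_l1norm {S F : Matrix (Fin n1) (Fin n2) ℝ}
    (hF : ∀ i j, S i j ≠ 0 → F i j = 0) (hF1 : ∀ i j, |F i j| ≤ 1) :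
    IsSubgradientAt l1norm S (signM S + F) := by
  intro B
  simp only [l1norm, minner, ← Finset.sum_add_distrib]
  exact Finset.sum_le_sum fun i _ => Finset.sum_le_sum fun j _ =>
    abs_add_sign_add_mul_sub_le (hF i j) (hF1 i j) (B i j)

theorem IsRootPCPMin.mul_frob_le {L0 S0 Z0 Lh Sh Y G E : Matrix (Fin n1) (Fin n2) ℝ}
    {lam mu : ℝ} (hmin : IsRootPCPMin (L0 + S0 + Z0) lam mu Lh Sh) (hlam : 0 ≤ lam) (hmu : 0 ≤ mu)
    (hY : IsSubgradientAt nuc L0 Y) (hG : IsSubgradientAt l1norm S0 G)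
    (hYG : Y = lam • (G + E)) :
    (mu - frob Y) * frob ((Lh - L0) + (Sh - S0)) ≤
      lam * frob E * frob (Sh - S0) + 2 * mu * frob Z0 := by
  have hopt := hmin L0 S0
  rw [show Lh + Sh - (L0 + S0 + Z0) = (Lh - L0) + (Sh - S0) - Z0 by abel,
    show L0 + S0 - (L0 + S0 + Z0) = -Z0 by abel, frob_neg] at hopt
  have hnuc := hY Lh
  have hl1 := mul_le_mul_of_nonneg_left (hG Sh) hlam
  set δL := Lh - L0
  set δS := Sh - S0
  have hYS : minner Y δS = lam * minner G δS + lam * minner E δS := by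
    rw [hYG, minner_smul_left, minner_add_left, mul_add]
  have hES : lam * minner E δS ≤ lam * (frob E * frob δS) :=
    mul_le_mul_of_nonneg_left ((le_abs_self _).trans (abs_minner_le_frob_mul_frob E δS)) hlam
  have hYδ : -(minner Y δL + minner Y δS) ≤ frob Y * frob (δL + δS) := by
    rw [← minner_add_right]
    exact (neg_le_abs _).trans (abs_minner_le_frob_mul_frob Y _)
  have hfit : mu * frob (δL + δS) ≤ mu * (frob (δL + δS - Z0) + frob Z0) :=
    mul_le_mul_of_nonneg_left (by simpa using frob_add_le (δL + δS - Z0) Z0) hmu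
  linarith

theorem IsRootPCPMin.frob_le {L0 S0 Z0 Lh Sh Y G E : Matrix (Fin n1) (Fin n2) ℝ}
    {lam mu c ε : ℝ} (hmin : IsRootPCPMin (L0 + S0 + Z0) lam mu Lh Sh) (hlam : 0 ≤ lam)
    (hmu : 0 < mu) (hY : IsSubgradientAt nuc L0 Y) (hG : IsSubgradientAt l1norm S0 G)
    (hYG : Y = lam • (G + E)) (hYnorm : frob Y ≤ c * mu) (hE : lam * frob E ≤ 2 * ε * mu)
    (hε : 0 ≤ ε) :
    (1 - c - ε) * frob ((Lh - L0) + (Sh - S0)) ≤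
      ε * (frob (Lh - L0) + frob (Sh - S0)) + 2 * frob Z0 := by
  have herror := hmin.mul_frob_le hlam hmu.le hY hG hYG
  set δL := Lh - L0
  set δS := Sh - S0
  have hscaled : mu * ((1 - c) * frob (δL + δS)) ≤ mu * (2 * ε * frob δS + 2 * frob Z0) := by
    linarith [mul_le_mul_of_nonneg_right hYnorm (frob_nonneg (δL + δS)),
      mul_le_mul_of_nonneg_right hE (frob_nonneg δS)]
  have hunscaled := le_of_mul_le_mul_left hscaled hmu
  have hδS : frob δS ≤ frob (δL + δS) + frob δL := by simpa using frob_sub_le (δL + δS) δL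
  linarith [mul_le_mul_of_nonneg_left hδS hε]

end Subgradient

section TangentSpace

variable {n1 n2 r : ℕ} {U : Matrix (Fin n1) (Fin r) ℝ} {V : Matrix (Fin n2) (Fin r) ℝ}
  {W : Matrix (Fin n1) (Fin n2) ℝ} {σ : Fin r → ℝ}

theorem memTperp_iff : memTperp U V W ↔ Uᵀ * W = 0 ∧ W * V = 0 := by
  refine ⟨fun hW => ⟨?_, ?_⟩, ?_⟩
  · rw [← trace_conjTranspose_mul_self_eq_zero_iff]
    simpa [minner_eq_trace, Matrix.mul_assoc] using hW (U * (Uᵀ * W)) ⟨(Uᵀ * W)ᵀ, 0, by simp⟩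
  · rw [← trace_mul_conjTranspose_self_eq_zero_iff, trace_mul_comm]
    simpa [minner_eq_trace, Matrix.mul_assoc, trace_mul_comm Vᵀ] using
      hW (W * V * Vᵀ) ⟨0, W * V, by simp⟩
  · rintro ⟨hUW, hWV⟩ _ ⟨Q, R, rfl⟩
    have hWU : Wᵀ * U = 0 := by simpa using congrArg transpose hUW
    have hVW : Vᵀ * Wᵀ = 0 := by simpa using congrArg transpose hWV
    rw [minner_eq_trace, Matrix.mul_add, trace_add, ← Matrix.mul_assoc, hWU,
      trace_mul_comm Wᵀ, Matrix.mul_assoc R, hVW]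
    simp

theorem spec_mul_transpose_add_le_one (hU : Uᵀ * U = 1) (hV : Vᵀ * V = 1)
    (hW : memTperp U V W) (hWnorm : spec W ≤ 1) : spec (U * Vᵀ + W) ≤ 1 := by
  obtain ⟨hUW, hWV⟩ := memTperp_iff.mp hW
  rw [spec_eq_l2_opNorm] at hWnorm ⊢
  exact l2_opNorm_mul_conjTranspose_add_le_one hU hV hUW hWV hWnorm

theorem frob_sq_mul_transpose_add (hU : Uᵀ * U = 1) (hV : Vᵀ * V = 1) (hUW : Uᵀ * W = 0) :
    frob (U * Vᵀ + W) ^ 2 = r + frob W ^ 2 := by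
  have hgram : (U * Vᵀ + W)ᵀ * (U * Vᵀ + W) = V * Vᵀ + Wᵀ * W :=
    conjTranspose_mul_self_mul_conjTranspose_add V hU hUW
  rw [frob_sq_eq_trace, frob_sq_eq_trace, hgram, trace_add, trace_mul_comm, hV]
  simp

theorem minner_mul_diagonal_mul_transpose (U : Matrix (Fin n1) (Fin r) ℝ) (σ : Fin r → ℝ)
    (V : Matrix (Fin n2) (Fin r) ℝ) (B : Matrix (Fin n1) (Fin n2) ℝ) :
    minner (U * diagonal σ * Vᵀ) B = ∑ k, σ k * (Uᵀ * B * V) k k := by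
  have h : (U * diagonal σ * Vᵀ)ᵀ * B = V * (diagonal σ * (Uᵀ * B)) := by
    simp [transpose_mul, Matrix.mul_assoc]
  rw [minner_eq_trace, h, trace_mul_comm, Matrix.mul_assoc]
  simp [trace, diagonal_mul]

theorem nuc_mul_diagonal_mul_transpose_le (hU : Uᵀ * U = 1) (hV : Vᵀ * V = 1)
    (hσ : ∀ k, 0 ≤ σ k) : nuc (U * diagonal σ * Vᵀ) ≤ ∑ k, σ k := by
  refine Real.sSup_le ?_ (Finset.sum_nonneg fun k _ => hσ k)
  rintro _ ⟨B, hB, rfl⟩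
  rw [minner_mul_diagonal_mul_transpose]
  rw [spec_eq_l2_opNorm] at hB
  exact Finset.sum_le_sum fun k _ => mul_le_of_le_one_right (hσ k)
    (re_conjTranspose_mul_mul_apply_self_le_one hU hV hB k)

theorem isSubgradientAt_nuc_mul_diagonal_mul_transpose (hU : Uᵀ * U = 1) (hV : Vᵀ * V = 1)
    (hσ : ∀ k, 0 ≤ σ k) (hW : memTperp U V W) (hWnorm : spec W ≤ 1) :
    IsSubgradientAt nuc (U * diagonal σ * Vᵀ) (U * Vᵀ + W) := by
  refine isSubgradientAt_nuc (spec_mul_transpose_add_le_one hU hV hW hWnorm) ?_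
  have hcompr : Uᵀ * (U * Vᵀ + W) * V = 1 := by
    rw [Matrix.mul_add, (memTperp_iff.mp hW).1, ← Matrix.mul_assoc, hU, add_zero, Matrix.one_mul,
      hV]
  calc nuc (U * diagonal σ * Vᵀ) ≤ ∑ k, σ k := nuc_mul_diagonal_mul_transpose_le hU hV hσ
    _ = minner (U * diagonal σ * Vᵀ) (U * Vᵀ + W) := by
      simp [minner_mul_diagonal_mul_transpose, hcompr]

theorem frob_mul_transpose_add_le (hr : (r : ℝ) ≤ n2 / 10) (hU : Uᵀ * U = 1) (hV : Vᵀ * V = 1)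
    (hUW : Uᵀ * W = 0) (hWnorm : spec W ≤ 1 / 2) :
    frob (U * Vᵀ + W) ≤ 0.84 * √(n2 / 2) := by
  refine le_of_sq_le_sq ?_ (by positivity)
  rw [frob_sq_mul_transpose_add hU hV hUW, mul_pow, Real.sq_sqrt (by positivity)]
  -- `r + ‖W‖_F² ≤ n2 / 10 + n2 / 4 = 0.7 * (n2 / 2)`, and `0.7 ≤ 0.84²`.
  linarith [frob_sq_le_of_spec_le hWnorm]

end TangentSpace

theorem eq_zero_of_projS_eq_zero {n1 n2 : ℕ} {Ω : Finset (Fin n1 × Fin n2)}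
    {M : Matrix (Fin n1) (Fin n2) ℝ} (h : projS Ω M = 0) {i : Fin n1} {j : Fin n2}
    (hij : (i, j) ∈ Ω) : M i j = 0 := by
  simpa [projS, hij] using congrFun₂ h i j

theorem inv_sqrt_mul_inv_sqrt_two {a b : ℝ} (ha : 0 < a) (hb : 0 < b) :
    (√a)⁻¹ * (1 / (260 * √2)) = 2 * (520 * √(a * b))⁻¹ * √(b / 2) := by
  rw [Real.sqrt_mul ha.le, Real.sqrt_div hb.le]
  field_simp
  norm_num

theorem rootPCP_error_inequality_general {n1 n2 r : ℕ}
    (hn1 : 1 ≤ n1) (hn2 : 1 ≤ n2) (hr : (r : ℝ) ≤ (n2 : ℝ) / 10)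
    {U : Matrix (Fin n1) (Fin r) ℝ} {V : Matrix (Fin n2) (Fin r) ℝ} {σ : Fin r → ℝ}
    {L0 S0 Z0 : Matrix (Fin n1) (Fin n2) ℝ}
    (hU : Uᵀ * U = 1) (hV : Vᵀ * V = 1) (hσ : ∀ k, 0 ≤ σ k)
    (hL0 : L0 = U * diagonal σ * Vᵀ)
    {W F E : Matrix (Fin n1) (Fin n2) ℝ}
    (hcert : U * Vᵀ + W = (√n1)⁻¹ • (signM S0 + F + E))
    (hW : memTperp U V W) (hWnorm : spec W ≤ 1 / 2)
    (hF : ∀ i j, S0 i j ≠ 0 → F i j = 0) (hFnorm : ∀ i j, |F i j| ≤ 1)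
    (hE : frob E ≤ 1 / (260 * √2))
    {Lh Sh : Matrix (Fin n1) (Fin n2) ℝ}
    (hmin : IsRootPCPMin (L0 + S0 + Z0) (√n1)⁻¹ √((n2 : ℝ) / 2) Lh Sh) :
    0.15 * frob ((Lh - L0) + (Sh - S0)) ≤
      (520 * √((n1 : ℝ) * n2))⁻¹ * (frob (Lh - L0) + frob (Sh - S0)) + 2 * frob Z0 := by
  have hn1' : (1 : ℝ) ≤ n1 := by exact_mod_cast hn1
  have hn2' : (1 : ℝ) ≤ n2 := by exact_mod_cast hn2
  have hnuc : IsSubgradientAt nuc L0 (U * Vᵀ + W) :=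
    hL0 ▸ isSubgradientAt_nuc_mul_diagonal_mul_transpose hU hV hσ hW (hWnorm.trans (by norm_num))
  have hl1 : IsSubgradientAt l1norm S0 (signM S0 + F) := isSubgradientAt_l1norm hF hFnorm
  have hYnorm := frob_mul_transpose_add_le hr hU hV (memTperp_iff.mp hW).1 hWnorm
  set ε := (520 * √((n1 : ℝ) * n2))⁻¹ with hεdef
  have hEnorm : (√n1)⁻¹ * frob E ≤ 2 * ε * √((n2 : ℝ) / 2) := by
    rw [hεdef, ← inv_sqrt_mul_inv_sqrt_two (by linarith) (by linarith)]
    gcongr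
  have hε : ε ≤ 0.01 := by
    have hsqrt : 1 ≤ √((n1 : ℝ) * n2) :=
      Real.one_le_sqrt.mpr (one_le_mul_of_one_le_of_one_le hn1' hn2')
    exact inv_le_of_inv_le₀ (by norm_num) (by linarith)
  have hmu : 0 < √((n2 : ℝ) / 2) := Real.sqrt_pos.mpr (by linarith)
  calc 0.15 * frob ((Lh - L0) + (Sh - S0))
      ≤ (1 - 0.84 - ε) * frob ((Lh - L0) + (Sh - S0)) := by
        gcongr
        · exact frob_nonneg _
        · linarith
    _ ≤ ε * (frob (Lh - L0) + frob (Sh - S0)) + 2 * frob Z0 :=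
      hmin.frob_le (by positivity) hmu hnuc hl1 hcert hYnorm hEnorm (by positivity)

/-- given a dual certificate, every √PCP minimizer with λ = 1/√n1 and
μ = √(n2/2) satisfies (1/(520√(n1·n2)))(‖δ_L‖_F + ‖δ_S‖_F) + 2‖Z0‖_F ≥ 0.15‖δ_L + δ_S‖_F. -/
theorem rootPCP_error_inequality {n1 n2 r : ℕ}
    (hn2 : 1 ≤ n2) (hn : n2 ≤ n1) (hr : (r : ℝ) ≤ (n2 : ℝ) / 10)
    (U : Matrix (Fin n1) (Fin r) ℝ) (V : Matrix (Fin n2) (Fin r) ℝ) (σ : Fin r → ℝ)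
    (L0 S0 Z0 : Matrix (Fin n1) (Fin n2) ℝ) (Ω : Finset (Fin n1 × Fin n2))
    (hU : Uᵀ * U = 1) (hV : Vᵀ * V = 1) (hσ : ∀ k, 0 < σ k)
    (hL0 : L0 = U * Matrix.diagonal σ * Vᵀ)
    (hS0 : ∀ p : Fin n1 × Fin n2, p ∈ Ω ↔ S0 p.1 p.2 ≠ 0)
    (W F H : Matrix (Fin n1) (Fin n2) ℝ)
    (hcert : U * Vᵀ + W = (Real.sqrt n1)⁻¹ • (signM S0 + F + projS Ω H))
    (hW : memTperp U V W) (hWnorm : spec W ≤ 1 / 2)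
    (hF : projS Ω F = 0) (hFnorm : ∀ i j, |F i j| ≤ 1 / 2)
    (hH : frob (projS Ω H) ≤ 1 / (260 * Real.sqrt 2)) :
    ∀ Lh Sh : Matrix (Fin n1) (Fin n2) ℝ,
      IsRootPCPMin (L0 + S0 + Z0) (Real.sqrt n1)⁻¹ (Real.sqrt ((n2 : ℝ) / 2)) Lh Sh →
        0.15 * frob ((Lh - L0) + (Sh - S0)) ≤
          (520 * Real.sqrt ((n1 : ℝ) * n2))⁻¹ * (frob (Lh - L0) + frob (Sh - S0)) +
            2 * frob Z0 := by
  intro Lh Sh hmin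
  exact rootPCP_error_inequality_general (hn2.trans hn) hn2 hr hU hV (fun k => (hσ k).le)
    hL0 hcert hW hWnorm (fun i j hij => eq_zero_of_projS_eq_zero hF ((hS0 (i, j)).mpr hij))
    (fun i j => (hFnorm i j).trans (by norm_num)) hH hmin
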